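/- arXiv:math/0402257 — 2 statements merged into one kernel-verified Lean document; each statement's English description precedes it below -/
import Mathlib

section
/- Let n ≥ 2. If Λ ⊆ 𝒮⁺ × ℝ is future regular, then its closure Λ̄ in 𝒮⁺ × ℝ is future regular and Ω⁺(Λ) = Ω⁺(Λ̄). -/
/-!
For each `x ∈ Ω⁺(Λ)`, the non-strict inequality `⟨x|v⟩ ≤ s` is a closed condition on `(v, s)`, so
it passes from `Λ` to its closure. On a point `(v, s)` of the closure with `v ∈ 𝒮⁺`, the linear
functional `⟨·|v⟩` is nonzero and bounded above by `s` on the open set `Ω⁺(Λ)`; a nonzero linear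
functional attains no maximum on an open set, so the inequality is in fact strict. Hence
`Ω⁺(Λ) ⊆ Ω⁺(Λ̄)`; the other inclusion is monotonicity, and regularity of `Λ̄` follows from the
equality.
-/

open Set

noncomputable section

/-- The Minkowski bilinear form `⟨x|y⟩ = -x₀y₀ + x₁y₁ + … + x_{n-1}y_{n-1}` on `ℝⁿ`. -/
def mink {n : ℕ} (x y : Fin n → ℝ) : ℝ :=
  ∑ i : Fin n, (if (i : ℕ) = 0 then (-1 : ℝ) else 1) * x i * y i

/-- `𝒮⁺`: future-oriented lightlike vectors of Euclidean norm 1. -/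
def Splus (n : ℕ) : Set (Fin n → ℝ) :=
  {v | mink v v = 0 ∧ ∑ i : Fin n, v i ^ 2 = 1 ∧ ∀ i : Fin n, (i : ℕ) = 0 → 0 < v i}

/-- `Ω⁺(Λ) = {x : ⟨x|v⟩ < s for all (v,s) ∈ Λ}`. -/
def OmegaPlus {n : ℕ} (Λ : Set ((Fin n → ℝ) × ℝ)) : Set (Fin n → ℝ) :=
  {x | ∀ p ∈ Λ, mink x p.1 < p.2}

/-- `Ω⁻(Λ) = {x : ⟨x|v⟩ > s for all (v,s) ∈ Λ}`. -/
def OmegaMinus {n : ℕ} (Λ : Set ((Fin n → ℝ) × ℝ)) : Set (Fin n → ℝ) :=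
  {x | ∀ p ∈ Λ, p.2 < mink x p.1}

lemma continuous_mink_right {n : ℕ} (x : Fin n → ℝ) : Continuous (fun y => mink x y) := by
  unfold mink
  fun_prop

lemma mink_add_smul {n : ℕ} (x y v : Fin n → ℝ) (t : ℝ) :
    mink (x + t • y) v = mink x v + t * mink y v := by
  simp only [mink, Finset.mul_sum, ← Finset.sum_add_distrib, Pi.add_apply, Pi.smul_apply,
    smul_eq_mul]
  exact Finset.sum_congr rfl fun i _ => by ring

/-- Reversing the time coordinate of `v` gives a vector whose Minkowski product with `v` is the
squared Euclidean norm of `v`. -/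
lemma exists_mink_eq_one {n : ℕ} {v : Fin n → ℝ} (hv : v ∈ Splus n) :
    ∃ y : Fin n → ℝ, mink y v = 1 := by
  refine ⟨fun i => (if (i : ℕ) = 0 then (-1 : ℝ) else 1) * v i, Eq.trans ?_ hv.2.1⟩
  unfold mink
  refine Finset.sum_congr rfl fun i _ => ?_
  by_cases h : (i : ℕ) = 0 <;> simp only [h, if_true, if_false] <;> ring

lemma mink_le_of_mem_closure {n : ℕ} {Λ : Set ((Fin n → ℝ) × ℝ)} {x : Fin n → ℝ}
    (hx : x ∈ OmegaPlus Λ) {p : (Fin n → ℝ) × ℝ} (hp : p ∈ closure Λ) :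
    mink x p.1 ≤ p.2 :=
  closure_minimal (fun q hq => (hx q hq).le)
    (isClosed_le ((continuous_mink_right x).comp continuous_fst) continuous_snd) hp

/-- if `Λ ⊆ 𝒮⁺ × ℝ` is future regular (i.e. `Ω⁺(Λ)` is nonempty and open),
then its closure `Λ̄` in `𝒮⁺ × ℝ` is future regular and `Ω⁺(Λ) = Ω⁺(Λ̄)`. -/
theorem stmt2 {n : ℕ} (hn : 2 ≤ n) (Λ : Set ((Fin n → ℝ) × ℝ))
    (hΛ : Λ ⊆ Splus n ×ˢ (univ : Set ℝ))
    (hreg : (OmegaPlus Λ).Nonempty ∧ IsOpen (OmegaPlus Λ)) :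
    ((OmegaPlus (closure Λ ∩ Splus n ×ˢ (univ : Set ℝ))).Nonempty ∧
      IsOpen (OmegaPlus (closure Λ ∩ Splus n ×ˢ (univ : Set ℝ)))) ∧
    OmegaPlus Λ = OmegaPlus (closure Λ ∩ Splus n ×ˢ (univ : Set ℝ)) := by
  have heq : OmegaPlus Λ = OmegaPlus (closure Λ ∩ Splus n ×ˢ (univ : Set ℝ)) := by
    refine Subset.antisymm (fun x hx p hp => ?_)
      (fun x hx p hp => hx p ⟨subset_closure hp, hΛ hp⟩)
    obtain ⟨y, hy⟩ := exists_mink_eq_one hp.2.1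
    -- `⟨·|v⟩` increases at unit rate along the line `x + t y`, which stays in `Ω⁺(Λ)` for small `t`.
    have hcont : ContinuousAt (fun t : ℝ => x + t • y) 0 := by fun_prop
    have hev : ∀ᶠ t : ℝ in nhds 0, x + t • y ∈ OmegaPlus Λ :=
      hcont.eventually_mem (hreg.2.mem_nhds (by simpa using hx))
    obtain ⟨t, ht, htpos⟩ :=
      ((hev.filter_mono nhdsWithin_le_nhds).and
        (self_mem_nhdsWithin : Ioi (0 : ℝ) ∈ nhdsWithin 0 (Ioi 0))).exists
    have hle := mink_le_of_mem_closure ht hp.1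
    rw [mink_add_smul, hy, mul_one] at hle
    have htpos' : 0 < t := htpos
    linarith
  exact ⟨heq ▸ hreg, heq⟩
end
end

section
/- Let n ≥ 3 and let g be a linear map of ℝⁿ preserving ⟨·|·⟩ such that p = g − id is nilpotent and nonzero. Then: (a) J := Im(p) ∩ ker(p) is one-dimensional and spanned by a lightlike vector; (b) Im(p²) = J, hence p² ≠ 0 and p³ = 0; (c) ker(p²) = J⊥ (the orthogonal of J with respect to ⟨·|·⟩); (d) p maps J⊥ into J; (e) ker(p) = (Im p)⊥; (f) every vector of Im(p) not lying in J is spacelike. -/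
/-!
Write `⟨·|·⟩` for `mink`. Expanding `⟨gx|gy⟩ = ⟨x|y⟩` with `g = id + p` gives
`⟨px|py⟩ + ⟨px|y⟩ + ⟨x|py⟩ = 0` (`mink_expand`), that is, `⟨px|gy⟩ = -⟨x|py⟩`; as `g` is onto and the
form is nondegenerate, `ker p = (Im p)⊥`. Hence `J = Im p ∩ ker p` is totally isotropic. It contains
the last nonzero power of `p`, so it is nonzero, and in Lorentzian signature this forces `J` to be
a lightlike line: a vector orthogonal to a nonzero lightlike `v` and not spacelike is a multiple
of `v` (`mem_span_of_orthogonal_lightlike`). Since `Im p ⊆ (ker p)⊥ ⊆ J⊥`, the same lemma shows that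
vectors of `Im p ∖ J` are spacelike.

The form induced on `J⊥ / J` is positive definite, so the unipotent isometry induced by `g` there is
trivial, i.e. `p(J⊥) ⊆ J`. Concretely, if `u ∈ J⊥` and `p²u ∈ J`, then the identity above for the pair
`(u, pu)` reads `⟨pu|pu⟩ = 0`, so `pu ∈ J`; nilpotency and descent on the exponent conclude.
It follows that `p²` maps into `J` and `p³ = 0`. Finally `p² ≠ 0`: otherwise `px` would be a multiple
of `v` for all `x`, and the polarised identity `⟨px|y⟩ + ⟨x|py⟩ = 0` would force `p = 0`.
-/

open Set

noncomputable section

theorem mink_comm {n : ℕ} (x y : Fin n → ℝ) : mink x y = mink y x := by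
  unfold mink
  exact Finset.sum_congr rfl fun i _ => by ring

theorem mink_add_left {n : ℕ} (x y z : Fin n → ℝ) :
    mink (x + y) z = mink x z + mink y z := by
  unfold mink
  rw [← Finset.sum_add_distrib]
  exact Finset.sum_congr rfl fun i _ => by rw [Pi.add_apply]; ring

theorem mink_smul_left {n : ℕ} (c : ℝ) (x z : Fin n → ℝ) :
    mink (c • x) z = c * mink x z := by
  unfold mink
  rw [Finset.mul_sum]
  exact Finset.sum_congr rfl fun i _ => by rw [Pi.smul_apply, smul_eq_mul]; ring

theorem mink_add_right {n : ℕ} (x y z : Fin n → ℝ) :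
    mink z (x + y) = mink z x + mink z y := by
  rw [mink_comm, mink_add_left, mink_comm x, mink_comm y]

theorem mink_smul_right {n : ℕ} (c : ℝ) (x z : Fin n → ℝ) :
    mink z (c • x) = c * mink z x := by
  rw [mink_comm, mink_smul_left, mink_comm x]

theorem mink_zero_left {n : ℕ} (z : Fin n → ℝ) : mink 0 z = 0 := by
  simp [mink]

theorem eq_zero_of_mink_eq_zero {n : ℕ} (x : Fin n → ℝ) (h : ∀ y, mink x y = 0) : x = 0 := by
  funext i
  have hi := h (Pi.single i 1)
  unfold mink at hi
  rw [Finset.sum_eq_single i (fun j _ hj => by simp [hj]) (by simp)] at hi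
  split_ifs at hi <;> simpa using hi

/-- The form is positive definite on the hyperplane `x₀ = 0`. -/
theorem eq_zero_of_time_zero {n : ℕ} (x : Fin n → ℝ) (h0 : ∀ i : Fin n, (i : ℕ) = 0 → x i = 0)
    (hx : mink x x ≤ 0) : x = 0 := by
  have hsum : mink x x = ∑ i, x i * x i := by
    unfold mink
    refine Finset.sum_congr rfl fun i _ => ?_
    by_cases hi : (i : ℕ) = 0
    · simp [h0 i hi]
    · simp [hi]
  rw [hsum] at hx
  have hz := (Finset.sum_eq_zero_iff_of_nonneg (fun i _ => mul_self_nonneg (x i))).1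
    (le_antisymm hx (Finset.sum_nonneg fun i _ => mul_self_nonneg (x i)))
  funext i
  exact mul_self_eq_zero.1 (hz i (Finset.mem_univ i))

/-- The Lorentzian signature enters only here: on `v⊥`, for `v` lightlike, the form is positive
semidefinite with radical `ℝv`. -/
theorem mem_span_of_orthogonal_lightlike {n : ℕ} (v x : Fin n → ℝ) (hv : v ≠ 0)
    (hvv : mink v v = 0) (hxv : mink x v = 0) (hxx : mink x x ≤ 0) :
    ∃ c : ℝ, x = c • v := by
  have ht : ∃ i : Fin n, (i : ℕ) = 0 ∧ v i ≠ 0 := by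
    by_contra hcon
    push Not at hcon
    exact hv (eq_zero_of_time_zero v hcon hvv.le)
  obtain ⟨i, hi, hvi⟩ := ht
  refine ⟨x i / v i, ?_⟩
  -- Removing the time component of `x` along `v` does not change `⟨x|x⟩`.
  have hz : x + (-(x i / v i)) • v = 0 := by
    apply eq_zero_of_time_zero
    · intro j hj
      obtain rfl : j = i := Fin.ext (hj.trans hi.symm)
      simp only [Pi.add_apply, Pi.smul_apply, smul_eq_mul]
      field_simp
      ring
    · simp only [mink_add_left, mink_add_right, mink_smul_left, mink_smul_right, hvv, hxv,
        mink_comm v x]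
      linarith
  rw [neg_smul] at hz
  exact add_neg_eq_zero.1 hz

/-- The isometry condition for `g = id + p`. -/
theorem mink_expand {n : ℕ} (g : (Fin n → ℝ) ≃ₗ[ℝ] (Fin n → ℝ))
    (hg : ∀ x y : Fin n → ℝ, mink (g x) (g y) = mink x y)
    (p : (Fin n → ℝ) →ₗ[ℝ] (Fin n → ℝ)) (hgp : ∀ x, g x = p x + x) (x y : Fin n → ℝ) :
    mink (p x) (p y) + mink (p x) y + mink x (p y) = 0 := by
  have h := hg x y
  rw [hgp, hgp] at h
  simp only [mink_add_left, mink_add_right] at h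
  linarith

/-- structure of a nontrivial unipotent linear isometry `g` of `Mⁿ`,
with `p = g − id` nilpotent and nonzero: (a) `J = Im(p) ∩ ker(p)` is a line spanned by a
lightlike vector; (b) `Im(p²) = J`, `p² ≠ 0`, `p³ = 0`; (c) `ker(p²) = J⊥`;
(d) `p(J⊥) ⊆ J`; (e) `ker(p) = (Im p)⊥`; (f) vectors of `Im(p) ∖ J` are spacelike. -/
theorem stmt11 {n : ℕ} (hn : 3 ≤ n)
    (g : (Fin n → ℝ) ≃ₗ[ℝ] (Fin n → ℝ))
    (hg : ∀ x y : Fin n → ℝ, mink (g x) (g y) = mink x y)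
    (p : (Fin n → ℝ) →ₗ[ℝ] (Fin n → ℝ))
    (hp : p = (g : (Fin n → ℝ) →ₗ[ℝ] (Fin n → ℝ)) - LinearMap.id)
    (hnil : IsNilpotent p) (hpne : p ≠ 0)
    (J : Submodule ℝ (Fin n → ℝ)) (hJ : J = LinearMap.range p ⊓ LinearMap.ker p) :
    (∃ v₀ : Fin n → ℝ, v₀ ≠ 0 ∧ mink v₀ v₀ = 0 ∧ J = Submodule.span ℝ {v₀}) ∧
    (LinearMap.range (p ∘ₗ p) = J ∧ p ∘ₗ p ≠ 0 ∧ p ∘ₗ p ∘ₗ p = 0) ∧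
    ((LinearMap.ker (p ∘ₗ p) : Set (Fin n → ℝ)) =
      {x : Fin n → ℝ | ∀ y ∈ J, mink x y = 0}) ∧
    (∀ x : Fin n → ℝ, (∀ y ∈ J, mink x y = 0) → p x ∈ J) ∧
    ((LinearMap.ker p : Set (Fin n → ℝ)) =
      {x : Fin n → ℝ | ∀ y ∈ LinearMap.range p, mink x y = 0}) ∧
    (∀ x ∈ LinearMap.range p, x ∉ J → 0 < mink x x) := by
  have hgp : ∀ x, g x = p x + x := fun x => by simp [hp]
  have hE := mink_expand g hg p hgp
  have hKI : ∀ x y, p x = 0 → mink x (p y) = 0 := by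
    intro x y hx
    have h := hE x y
    rw [hx, mink_zero_left, mink_zero_left] at h
    linarith
  have hIK : ∀ x, (∀ y, mink x (p y) = 0) → p x = 0 := by
    intro x hx
    apply eq_zero_of_mink_eq_zero
    intro z
    obtain ⟨y, rfl⟩ := g.surjective z
    rw [hgp, mink_add_right]
    linarith [hE x y, hx y]
  have hmem : ∀ x, x ∈ J ↔ (∃ y, p y = x) ∧ p x = 0 := by
    intro x
    rw [hJ, Submodule.mem_inf, LinearMap.mem_range, LinearMap.mem_ker]
  have hJne : ∃ v ∈ J, v ≠ 0 := by
    by_contra! hcon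
    -- If `J = 0`, then `p` is injective on its image, so a vanishing power `p ^ (k + 1)` descends to `p = 0`.
    obtain ⟨k, hk⟩ := hnil
    have key : ∀ k, p ^ (k + 1) = 0 → p = 0 := by
      intro k
      induction k with
      | zero => intro h; simpa using h
      | succ k ih =>
        intro h
        apply ih
        refine LinearMap.ext fun x => ?_
        refine hcon _ ((hmem _).2 ⟨⟨(p ^ k) x, ?_⟩, ?_⟩)
        · rw [pow_succ', Module.End.mul_apply]
        · rw [← Module.End.mul_apply, ← pow_succ', h, LinearMap.zero_apply]
    exact hpne (key k (by rw [pow_succ, hk, zero_mul]))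
  obtain ⟨v, hvJ, hv⟩ := hJne
  have hiso : ∀ x ∈ J, ∀ y ∈ J, mink x y = 0 := by
    intro x hx y hy
    obtain ⟨⟨z, rfl⟩, -⟩ := (hmem y).1 hy
    exact hKI x z ((hmem x).1 hx).2
  have hvv := hiso v hvJ v hvJ
  have hIJ : ∀ x, ∀ y ∈ J, mink (p x) y = 0 := by
    intro x y hy
    rw [mink_comm]
    exact hKI y x ((hmem y).1 hy).2
  have hlor : ∀ x, mink x v = 0 → mink x x ≤ 0 → x ∈ J := by
    intro x h1 h2
    obtain ⟨c, rfl⟩ := mem_span_of_orthogonal_lightlike v x hv hvv h1 h2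
    exact J.smul_mem c hvJ
  have hmul : ∀ x ∈ J, ∃ c : ℝ, x = c • v := fun x hx =>
    mem_span_of_orthogonal_lightlike v x hv hvv (hiso x hx v hvJ) (hiso x hx x hx).le
  have hstep : ∀ u, (∀ y ∈ J, mink u y = 0) → p (p u) ∈ J → p u ∈ J := by
    intro u hu h
    refine hlor _ (hIJ u v hvJ) ?_
    linarith [hE u (p u), hIJ u _ h, hu _ h]
  have hd : ∀ x, (∀ y ∈ J, mink x y = 0) → p x ∈ J := by
    obtain ⟨k, hk⟩ := hnil
    have key : ∀ k x, (∀ y ∈ J, mink x y = 0) → (p ^ k) (p x) ∈ J → p x ∈ J := by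
      intro k
      induction k with
      | zero => intro x _ h; simpa using h
      | succ k ih =>
        intro x hx h
        refine hstep x hx (ih (p x) (hIJ x) ?_)
        rwa [pow_succ, Module.End.mul_apply] at h
    intro x hx
    refine key k x hx ?_
    rw [hk, LinearMap.zero_apply]
    exact J.zero_mem
  have hp2J : ∀ x, p (p x) ∈ J := fun x => hd (p x) (hIJ x)
  have hp2 : ∃ x, p (p x) ≠ 0 := by
    by_contra! hcon
    apply hpne
    have hpJ : ∀ x, p x ∈ J := fun x => (hmem _).2 ⟨⟨x, rfl⟩, hcon x⟩
    have hpol : ∀ x y, mink (p x) y + mink x (p y) = 0 := by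
      intro x y
      linarith [hE x y, hiso _ (hpJ x) _ (hpJ y)]
    obtain ⟨w, hw⟩ : ∃ w, mink v w ≠ 0 := by
      by_contra! h
      exact hv (eq_zero_of_mink_eq_zero v h)
    obtain ⟨a, ha⟩ := hmul _ (hpJ w)
    have ha0 : a = 0 := by
      have h := hpol w w
      rw [mink_comm w (p w), ha, mink_smul_left] at h
      have : a * mink v w = 0 := by linarith
      exact (mul_eq_zero.1 this).resolve_right hw
    refine LinearMap.ext fun y => ?_
    obtain ⟨b, hb⟩ := hmul _ (hpJ y)
    have h := hpol y w
    rw [hb, ha, ha0, zero_smul, mink_smul_left, mink_comm y, mink_zero_left, add_zero] at h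
    rw [hb, (mul_eq_zero.1 h).resolve_right hw, zero_smul, LinearMap.zero_apply]
  have hJ2 : ∀ x ∈ J, ∃ y, p (p y) = x := by
    intro x hx
    obtain ⟨y, hy⟩ := hp2
    obtain ⟨a, ha⟩ := hmul _ (hp2J y)
    obtain ⟨b, rfl⟩ := hmul x hx
    have ha0 : a ≠ 0 := by
      rintro rfl
      exact hy (by rw [ha, zero_smul])
    refine ⟨(b / a) • y, ?_⟩
    rw [map_smul, map_smul, ha, smul_smul, div_mul_cancel₀ b ha0]
  refine ⟨⟨v, hv, hvv, ?_⟩, ⟨?_, ?_, ?_⟩, ?_, hd, ?_, ?_⟩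
  · ext x
    rw [Submodule.mem_span_singleton]
    constructor
    · intro hx
      obtain ⟨c, hc⟩ := hmul x hx
      exact ⟨c, hc.symm⟩
    · rintro ⟨c, rfl⟩
      exact J.smul_mem c hvJ
  · ext x
    constructor
    · rintro ⟨y, rfl⟩
      exact hp2J y
    · intro hx
      exact hJ2 x hx
  · intro h
    obtain ⟨y, hy⟩ := hp2
    exact hy (LinearMap.congr_fun h y)
  · exact LinearMap.ext fun x => ((hmem _).1 (hp2J x)).2
  · ext x
    constructor
    · intro hx y hy
      have hx' : p (p x) = 0 := hx
      obtain ⟨z, rfl⟩ := hJ2 y hy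
      linarith [hE x (p z), hKI (p x) z hx', hKI (p x) (p z) hx']
    · intro hx
      exact ((hmem _).1 (hd x hx)).2
  · ext x
    constructor
    · rintro hx _ ⟨y, rfl⟩
      exact hKI x y hx
    · intro hx
      exact hIK x fun y => hx _ ⟨y, rfl⟩
  · rintro _ ⟨y, rfl⟩ hx
    by_contra! h
    exact hx (hlor _ (hIJ y v hvJ) h)
end
end
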